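/- Let T_1 : S → S_c and T_{d-1} : S^{d-1} → (S_c)^{d-1} be the Galerkin projectors that are orthogonal with respect to A_1 and A_{d-1} respectively, and suppose that ‖(I − T_1)u‖_{M_1} ≤ c h ‖u‖_{A_1} for all u ∈ S and ‖(I − T_{d-1})u‖_{M_{d-1}} ≤ c h ‖u‖_{A_{d-1}} for all u ∈ S^{d-1}. Then there is a constant c′ (depending only on c and d, not on h or p) such that ‖(I − T_{d-1} ⊗ T_1)u‖_{A_d} ≤ c′ h ‖u‖_{A_d M_d^{-1} A_d} for all u ∈ S^d; consequently the A_d-orthogonal Galerkin projector T_d onto (S_c)^d, being the A_d-best approximation, satisfies ‖(I − T_d)u‖_{A_d} ≤ c′ h ‖u‖_{A_d M_d^{-1} A_d} and hence ‖(I − T_d)u‖_{M_d} ≤ c′ h ‖u‖_{A_d} for all u ∈ S^d. -/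

import Mathlib

noncomputable section

open MeasureTheory Set

namespace SplineMG

/-- The `j`-th piece of the uniform partition of `[0,1]` into `m` subintervals of
length `h = 1/m`; the first and last pieces are extended to `-∞` resp. `+∞`
(the spline is extended polynomially outside `[0,1]`). -/
def pieceSet (m j : ℕ) : Set ℝ :=
  (if j = 0 then Iic ((1 : ℝ) / m) else Icc ((j : ℝ) / m) (((j : ℝ) + 1) / m)) ∪
  (if j = m - 1 then Ici (((m : ℝ) - 1) / m) else ∅)

/-- `u : ℝ → ℝ` belongs to the univariate spline space `S` of degree `p` and maximal
smoothness `C^{p-1}` on the uniform partition of `(0,1)` into `m` intervals of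
length `h = 1/m`. -/
def IsSpline (m p : ℕ) (u : ℝ → ℝ) : Prop :=
  ContDiffOn ℝ (p - 1 : ℕ) u (Ioo (0 : ℝ) 1) ∧
  ∀ j < m, ∃ q : Polynomial ℝ, q.natDegree ≤ p ∧ ∀ x ∈ pieceSet m j, u x = q.eval x

/-- `u` belongs to the subspace `S₀` of `S`: all odd derivatives of order `< p`
vanish at both endpoints. -/
def IsSpline0 (m p : ℕ) (u : ℝ → ℝ) : Prop :=
  IsSpline m p u ∧
  ∀ l : ℕ, 2 * l + 1 < p →
    iteratedDeriv (2 * l + 1) u 0 = 0 ∧ iteratedDeriv (2 * l + 1) u 1 = 0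

/-- The `L²(0,1)` inner product. -/
def ip0 (u v : ℝ → ℝ) : ℝ := ∫ x in Ioo (0 : ℝ) 1, u x * v x

/-- The squared `L²(0,1)` norm `‖u‖₀²`. -/
def l2normSq (u : ℝ → ℝ) : ℝ := ∫ x in Ioo (0 : ℝ) 1, u x ^ 2

/-- The `L²(0,1)` norm `‖u‖₀`. -/
def l2norm (u : ℝ → ℝ) : ℝ := Real.sqrt (l2normSq u)

/-- The squared `H¹(0,1)` seminorm `|u|₁²`. -/
def h1semiSq (u : ℝ → ℝ) : ℝ := ∫ x in Ioo (0 : ℝ) 1, deriv u x ^ 2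

/-- The `H¹(0,1)` seminorm `|u|₁`. -/
def h1semi (u : ℝ → ℝ) : ℝ := Real.sqrt (h1semiSq u)

/-- The squared full `H¹(0,1)` norm. -/
def h1normSq (u : ℝ → ℝ) : ℝ := l2normSq u + h1semiSq u

/-- `u` belongs to `S₁`, the `L²(0,1)`-orthogonal complement of `S₀` in `S`. -/
def IsSpline1 (m p : ℕ) (u : ℝ → ℝ) : Prop :=
  IsSpline m p u ∧ ∀ v, IsSpline0 m p v → ip0 u v = 0

/-- `v = Q₀ u` is the `L²(0,1)`-orthogonal projection of `u` onto `S₀`. -/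
def IsL2Proj0 (m p : ℕ) (u v : ℝ → ℝ) : Prop :=
  IsSpline0 m p v ∧ ∀ w, IsSpline0 m p w → ip0 (u - v) w = 0

/-- The component predicate: `false ↦ S₀`, `true ↦ S₁`. -/
def IsSplineC (m p : ℕ) : Bool → (ℝ → ℝ) → Prop
  | false => IsSpline0 m p
  | true => IsSpline1 m p

/-- The tensor-product spline space `S^d = S ⊗ ⋯ ⊗ S` on `(0,1)^d`. -/
def TensorSpline (d m p : ℕ) : Submodule ℝ ((Fin d → ℝ) → ℝ) :=
  Submodule.span ℝ {u | ∃ f : Fin d → ℝ → ℝ, (∀ i, IsSpline m p (f i)) ∧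
    u = fun x => ∏ i, f i (x i)}

/-- The subspace `S_α = S_{α₁} ⊗ ⋯ ⊗ S_{α_d}` of `S^d`, for `α ∈ {0,1}^d`
(`false ↦ 0`, `true ↦ 1`). -/
def TensorSplineSub (d m p : ℕ) (α : Fin d → Bool) : Submodule ℝ ((Fin d → ℝ) → ℝ) :=
  Submodule.span ℝ {u | ∃ f : Fin d → ℝ → ℝ, (∀ i, IsSplineC m p (α i) (f i)) ∧
    u = fun x => ∏ i, f i (x i)}

/-- The open unit cube `Ω = (0,1)^d`. -/
def cube (d : ℕ) : Set (Fin d → ℝ) := Set.univ.pi fun _ => Ioo (0 : ℝ) 1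

/-- The `i`-th partial derivative. -/
def pd (d : ℕ) (i : Fin d) (u : (Fin d → ℝ) → ℝ) : (Fin d → ℝ) → ℝ :=
  fun x => deriv (fun t => u (Function.update x i t)) (x i)

/-- The `L²(Ω)` inner product on the unit cube. -/
def ipd (d : ℕ) (u v : (Fin d → ℝ) → ℝ) : ℝ := ∫ x in cube d, u x * v x

/-- The squared `L²(Ω)` norm. -/
def l2normSqD (d : ℕ) (u : (Fin d → ℝ) → ℝ) : ℝ := ∫ x in cube d, u x ^ 2

/-- The bilinear form `a(u,v) = ∫_Ω (∇u·∇v + uv) dx`. -/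
def aForm (d : ℕ) (u v : (Fin d → ℝ) → ℝ) : ℝ :=
  ∫ x in cube d, (∑ i, pd d i u x * pd d i v x) + u x * v x

/-- The squared `H¹(Ω)` seminorm. -/
def h1semiSqD (d : ℕ) (u : (Fin d → ℝ) → ℝ) : ℝ :=
  ∫ x in cube d, ∑ i, pd d i u x ^ 2

/-- The squared full `H¹(Ω)` norm. -/
def h1normSqD (d : ℕ) (u : (Fin d → ℝ) → ℝ) : ℝ := l2normSqD d u + h1semiSqD d u

/-- `v = Q_α u` is the `L²(Ω)`-orthogonal projection of `u` onto `S_α`. -/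
def IsL2ProjSub (d m p : ℕ) (α : Fin d → Bool) (u v : (Fin d → ℝ) → ℝ) : Prop :=
  v ∈ TensorSplineSub d m p α ∧ ∀ w ∈ TensorSplineSub d m p α, ipd d (u - v) w = 0

/-- The coarse tensor-product spline space `(S_c)^d` (with `m/2` knot spans of
width `2h` per direction). -/
def TensorSplineCoarse (d m p : ℕ) : Submodule ℝ ((Fin d → ℝ) → ℝ) :=
  TensorSpline d (m / 2) p

/-- `v = T_c u` is the `a(·,·)`-orthogonal (Galerkin) projection of `u` onto `(S_c)^d`. -/
def IsGalerkinCoarseProj (d m p : ℕ) (u v : (Fin d → ℝ) → ℝ) : Prop :=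
  v ∈ TensorSplineCoarse d m p ∧ ∀ w ∈ TensorSplineCoarse d m p, aForm d (u - v) w = 0

end SplineMG

namespace SplineMG

/-- The bilinear form of the tensor-product operator `A_{d−1} ⊗ A_1` on `S^d`
(`d = e + 2`, with `A_1` acting in the last coordinate):
`⟨(A_{d−1}⊗A_1)u, v⟩ = ∫ Σ_{j<d−1} (∂_j∂_d u·∂_j∂_d v + ∂_j u·∂_j v)
  + ∂_d u·∂_d v + u·v`.
The projector `T_{d−1} ⊗ T_1` is the projector onto `(S_c)^d` that is orthogonal
with respect to this form. -/
def mixedForm (e : ℕ) (u v : (Fin (e + 2) → ℝ) → ℝ) : ℝ :=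
  ∫ x in cube (e + 2),
    (∑ j : Fin (e + 2),
      if j = Fin.last (e + 1) then 0
      else
        pd (e + 2) j (pd (e + 2) (Fin.last (e + 1)) u) x *
            pd (e + 2) j (pd (e + 2) (Fin.last (e + 1)) v) x +
          pd (e + 2) j u x * pd (e + 2) j v x) +
      pd (e + 2) (Fin.last (e + 1)) u x * pd (e + 2) (Fin.last (e + 1)) v x +
      u x * v x

end SplineMG
namespace SplineMG

lemma exists_proj {ι : Type*} [Fintype ι] (w : ι → ℝ) (hw : ∀ i, 0 < w i)
    (C : Submodule ℝ (ι → ℝ)) :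
    ∃ T : (ι → ℝ) →ₗ[ℝ] (ι → ℝ), (∀ v, T v ∈ C) ∧
      ∀ v, ∀ z ∈ C, ∑ i, w i * (v i - T v i) * z i = 0 := by
  classical
  let B : LinearMap.BilinForm ℝ (ι → ℝ) := LinearMap.mk₂ ℝ (fun u v => ∑ i, w i * u i * v i)
    (by intro a b c; simp only [← Finset.sum_add_distrib]; congr 1; ext i; simp; ring)
    (by intro a b c; simp only [smul_eq_mul, Finset.mul_sum]; congr 1; ext i; simp; ring)
    (by intro a b c; simp only [← Finset.sum_add_distrib]; congr 1; ext i; simp; ring)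
    (by intro a b c; simp only [smul_eq_mul, Finset.mul_sum]; congr 1; ext i; simp; ring)
  have hB : ∀ u v, B u v = ∑ i, w i * u i * v i := fun u v => rfl
  have hsym : ∀ u v, B u v = B v u := by
    intro u v; rw [hB, hB]; congr 1; ext i; ring
  have hrefl : B.IsRefl := by
    intro u v h; rw [hsym]; exact h
  have hd : Disjoint C (B.orthogonal C) := by
    rw [Submodule.disjoint_def]
    intro x hx hx'
    have h0 : B x x = 0 := hx' x hx
    rw [hB] at h0
    rw [Finset.sum_eq_zero_iff_of_nonneg
      (fun i _ => by rw [mul_assoc]; exact mul_nonneg (hw i).le (mul_self_nonneg _))] at h0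
    ext i
    have := h0 i (Finset.mem_univ i)
    have hwi := (hw i).ne'
    simpa [hwi] using this
  have hc : IsCompl C (B.orthogonal C) :=
    (LinearMap.BilinForm.isCompl_orthogonal_iff_disjoint hrefl).2 hd
  refine ⟨C.projection _ hc, fun v => Submodule.projection_apply_mem hc v, ?_⟩
  intro v z hz
  have hm : v - C.projection _ hc v ∈ B.orthogonal C := by
    rw [← Submodule.projection_apply_eq_zero_iff hc, map_sub]
    have := Submodule.projection_apply_left hc ⟨C.projection _ hc v, Submodule.projection_apply_mem hc v⟩
    simp only at this
    rw [this, sub_self]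
  have := hm z hz
  have h2 : B (v - C.projection _ hc v) z = 0 := by rw [hsym]; exact this
  rw [hB] at h2
  exact h2

section core
variable {ι κ : Type*} [Fintype ι] [Fintype κ]

/-- 1D-type estimates for a projector. -/
structure ProjData (w : ι → ℝ) (C : Submodule ℝ (ι → ℝ)) (c : ℝ)
    (T : (ι → ℝ) →ₗ[ℝ] (ι → ℝ)) : Prop where
  mem : ∀ v, T v ∈ C
  orth : ∀ v, ∀ z ∈ C, ∑ i, w i * (v i - T v i) * z i = 0
  est : ∀ v, ∑ i, (v i - T v i) ^ 2 ≤ c * ∑ i, w i * v i ^ 2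

variable {w : ι → ℝ} {C : Submodule ℝ (ι → ℝ)} {c : ℝ} {T : (ι → ℝ) →ₗ[ℝ] (ι → ℝ)}

lemma ProjData.orth' (h : ProjData w C c T) (v : ι → ℝ) {z} (hz : z ∈ C) :
    ∑ i, w i * z i * T v i = ∑ i, w i * z i * v i := by
  have := h.orth v z hz
  rw [← sub_eq_zero, ← Finset.sum_sub_distrib, ← neg_eq_zero, ← Finset.sum_neg_distrib, ← this]
  congr 1; ext i; ring

lemma ProjData.contr (h : ProjData w C c T) (hw : ∀ i, 0 < w i) (v : ι → ℝ) :
    ∑ i, w i * T v i ^ 2 ≤ ∑ i, w i * v i ^ 2 := by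
  have h1 := h.orth v _ (h.mem v)
  have h2 : ∑ i, w i * v i ^ 2 = ∑ i, w i * T v i ^ 2 + ∑ i, w i * (v i - T v i) ^ 2
      + 2 * ∑ i, w i * (v i - T v i) * T v i := by
    rw [Finset.mul_sum, ← Finset.sum_add_distrib, ← Finset.sum_add_distrib]
    congr 1; ext i; ring
  have h3 : 0 ≤ ∑ i, w i * (v i - T v i) ^ 2 :=
    Finset.sum_nonneg fun i _ => mul_nonneg (hw i).le (sq_nonneg _)
  rw [h1] at h2; linarith

lemma ProjData.idem (h : ProjData w C c T) (hw : ∀ i, 0 < w i) {z} (hz : z ∈ C) : T z = z := by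
  have h1 := h.orth z _ (C.sub_mem hz (h.mem z))
  rw [Finset.sum_eq_zero_iff_of_nonneg
      (fun i _ => by rw [Pi.sub_apply, mul_assoc]; exact mul_nonneg (hw i).le (mul_self_nonneg _))] at h1
  ext i
  have := h1 i (Finset.mem_univ i)
  have hwi := (hw i).ne'
  simp [hwi, sub_eq_zero] at this
  exact this.symm

lemma ProjData.dual (h : ProjData w C c T) (hw : ∀ i, 0 < w i) (hc : 0 ≤ c) (v : ι → ℝ) :
    ∑ i, w i * (v i - T v i) ^ 2 ≤ c * ∑ i, w i ^ 2 * v i ^ 2 := by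
  set X := ∑ i, w i * (v i - T v i) ^ 2 with hX
  have hX0 : 0 ≤ X := Finset.sum_nonneg fun i _ => mul_nonneg (hw i).le (sq_nonneg _)
  have h1 : X = ∑ i, (w i * v i) * (v i - T v i) := by
    have := h.orth v _ (h.mem v)
    rw [← sub_eq_zero, hX, ← Finset.sum_sub_distrib, ← neg_eq_zero, ← Finset.sum_neg_distrib, ← this]
    congr 1; ext i; ring
  have h2 := Finset.sum_mul_sq_le_sq_mul_sq Finset.univ (fun i => w i * v i) (fun i => v i - T v i)
  rw [← h1] at h2
  have h3 := h.est (v - T v)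
  rw [map_sub, h.idem hw (h.mem v)] at h3
  simp only [sub_self, Pi.sub_apply, sub_zero] at h3
  rw [← hX] at h3
  simp only [mul_pow] at h2
  have hN : 0 ≤ ∑ i, w i ^ 2 * v i ^ 2 := Finset.sum_nonneg fun i _ => by positivity
  rcases hX0.eq_or_lt with h0 | h0
  · rw [← h0]; positivity
  · have : X * X ≤ (c * ∑ i, w i ^ 2 * v i ^ 2) * X := by nlinarith
    exact le_of_mul_le_mul_right this h0

variable {w' : κ → ℝ} {C' : Submodule ℝ (κ → ℝ)} {T' : (κ → ℝ) →ₗ[ℝ] (κ → ℝ)}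

def appL (T : (ι → ℝ) →ₗ[ℝ] (ι → ℝ)) (U : ι → κ → ℝ) : ι → κ → ℝ :=
  fun i k => T (fun j => U j k) i
def appR (T' : (κ → ℝ) →ₗ[ℝ] (κ → ℝ)) (U : ι → κ → ℝ) : ι → κ → ℝ :=
  fun i k => T' (U i) k

lemma lin_eq (T : (ι → ℝ) →ₗ[ℝ] (ι → ℝ)) [DecidableEq ι] (v : ι → ℝ) (i : ι) :
    T v i = ∑ j, v j * T (Pi.single j 1) i := by
  conv_lhs => rw [LinearMap.pi_apply_eq_sum_univ T v]
  simp only [Finset.sum_apply, Pi.smul_apply, smul_eq_mul]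
  refine Finset.sum_congr rfl fun j _ => ?_
  have : (fun k => if j = k then (1 : ℝ) else 0) = Pi.single j 1 := by
    ext k; simp [Pi.single_apply, eq_comm]
  rw [this]

lemma app_comm (U : ι → κ → ℝ) : appL T (appR T' U) = appR T' (appL T U) := by
  classical
  ext i k
  simp only [appL, appR]
  rw [lin_eq T, lin_eq T']
  simp only [lin_eq T' (U _) k]
  have e2 : ∀ l, appL T U i l = ∑ j, U j l * T (Pi.single j 1) i :=
    fun l => lin_eq T _ i
  simp only [e2, Finset.sum_mul]
  rw [Finset.sum_comm]
  refine Finset.sum_congr rfl fun j _ => Finset.sum_congr rfl fun l _ => ?_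
  ring

def tens (C : Submodule ℝ (ι → ℝ)) (C' : Submodule ℝ (κ → ℝ)) : Submodule ℝ (ι → κ → ℝ) :=
  Submodule.span ℝ {U | ∃ f ∈ C, ∃ g ∈ C', U = fun i k => f i * g k}

lemma app_mem (h : ∀ v, T v ∈ C) (h' : ∀ v, T' v ∈ C') (U : ι → κ → ℝ) :
    appL T (appR T' U) ∈ tens C C' := by
  classical
  have : appL T (appR T' U) = ∑ j, ∑ l, U j l •
      (fun i k => T (Pi.single j 1) i * T' (Pi.single l 1) k : ι → κ → ℝ) := by
    ext i k
    simp only [appL, appR, Finset.sum_apply, Pi.smul_apply, smul_eq_mul]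
    rw [lin_eq T]
    simp only [lin_eq T' (U _) k, Finset.sum_mul]
    congr 1; ext j; congr 1; ext l; ring
  rw [this]
  refine Submodule.sum_mem _ fun j _ => Submodule.sum_mem _ fun l _ => Submodule.smul_mem _ _ ?_
  exact Submodule.subset_span ⟨_, h _, _, h' _, rfl⟩

lemma app_orth (h : ProjData w C c T) (h' : ProjData w' C' c T') (U : ι → κ → ℝ)
    {Z} (hZ : Z ∈ tens C C') :
    ∑ i, ∑ k, (w i * w' k) * (U i k - appL T (appR T' U) i k) * Z i k = 0 := by
  induction hZ using Submodule.span_induction with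
  | mem Z hZ =>
    obtain ⟨f, hf, g, hg, rfl⟩ := hZ
    have e1 : ∑ i, ∑ k, (w i * w' k) * appL T (appR T' U) i k * (f i * g k)
        = ∑ i, ∑ k, (w i * w' k) * U i k * (f i * g k) := by
      rw [Finset.sum_comm]
      have : ∀ k, ∑ i, (w i * w' k) * appL T (appR T' U) i k * (f i * g k)
          = ∑ i, (w i * w' k) * appR T' U i k * (f i * g k) := by
        intro k
        have := h.orth' (fun j => appR T' U j k) hf
        have h3 := congrArg (fun x => w' k * g k * x) this
        simp only [Finset.mul_sum] at h3
        calc _ = _ := Finset.sum_congr rfl fun i _ => (by simp only [appL]; ring)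
          _ = _ := h3
          _ = _ := Finset.sum_congr rfl fun i _ => (by ring)
      simp only [this]
      rw [Finset.sum_comm]
      refine Finset.sum_congr rfl fun i _ => ?_
      have := h'.orth' (U i) hg
      have h3 := congrArg (fun x => w i * f i * x) this
      simp only [Finset.mul_sum] at h3
      calc _ = _ := Finset.sum_congr rfl fun k _ => (by simp only [appR]; ring)
        _ = _ := h3
        _ = _ := Finset.sum_congr rfl fun k _ => (by ring)
    simp only [mul_sub, sub_mul, Finset.sum_sub_distrib, e1, sub_self]
  | zero => simp
  | add x y _ _ hx hy =>
    simp only [Pi.add_apply, mul_add, Finset.sum_add_distrib, hx, hy, add_zero]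
  | smul a x _ hx =>
    have : ∀ i k, (w i * w' k) * (U i k - appL T (appR T' U) i k) * (a • x) i k
      = a * ((w i * w' k) * (U i k - appL T (appR T' U) i k) * x i k) := by
      intro i k; simp only [Pi.smul_apply, smul_eq_mul]; ring
    simp only [this, ← Finset.mul_sum, hx, mul_zero]

lemma app_est (h : ProjData w C c T) (h' : ProjData w' C' c T') (hc : 0 ≤ c)
    (hw : ∀ i, 0 < w i) (U : ι → κ → ℝ) :
    ∑ i, ∑ k, w i * (U i k - appL T (appR T' U) i k) ^ 2 ≤
      2 * c * ∑ i, ∑ k, (w i ^ 2 + w i * w' k) * U i k ^ 2 := by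
  have e : ∀ i k, U i k - appL T (appR T' U) i k =
      (U i k - appL T U i k) + appL T (fun i k => U i k - appR T' U i k) i k := by
    intro i k
    have : (fun j => U j k - appR T' U j k) = (fun j => U j k) - (fun j => appR T' U j k) := rfl
    simp only [appL] at *
    rw [this, map_sub]; simp
  have h1 : ∑ i, ∑ k, w i * (U i k - appL T U i k) ^ 2 ≤ c * ∑ i, ∑ k, w i ^ 2 * U i k ^ 2 := by
    rw [Finset.sum_comm, Finset.sum_comm (f := fun i k => w i ^ 2 * U i k ^ 2), Finset.mul_sum]
    exact Finset.sum_le_sum fun k _ => h.dual hw hc (fun j => U j k)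
  have h2 : ∑ i, ∑ k, w i * appL T (fun i k => U i k - appR T' U i k) i k ^ 2 ≤
      ∑ i, ∑ k, w i * (U i k - appR T' U i k) ^ 2 := by
    rw [Finset.sum_comm, Finset.sum_comm (f := fun i k => w i * (U i k - appR T' U i k) ^ 2)]
    exact Finset.sum_le_sum fun k _ => h.contr hw (fun j => U j k - appR T' U j k)
  have h3 : ∑ i, ∑ k, w i * (U i k - appR T' U i k) ^ 2 ≤
      c * ∑ i, ∑ k, w i * w' k * U i k ^ 2 := by
    rw [Finset.mul_sum]
    refine Finset.sum_le_sum fun i _ => ?_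
    have := mul_le_mul_of_nonneg_left (h'.est (U i)) (hw i).le
    rw [Finset.mul_sum] at this
    refine this.trans_eq ?_
    simp only [Finset.mul_sum]
    congr 1; ext k; ring
  have h4 : ∑ i, ∑ k, w i * (U i k - appL T (appR T' U) i k) ^ 2 ≤
      2 * ∑ i, ∑ k, w i * (U i k - appL T U i k) ^ 2 +
      2 * ∑ i, ∑ k, w i * appL T (fun i k => U i k - appR T' U i k) i k ^ 2 := by
    simp only [Finset.mul_sum, ← Finset.sum_add_distrib]
    refine Finset.sum_le_sum fun i _ => Finset.sum_le_sum fun k _ => ?_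
    rw [e]
    nlinarith [mul_nonneg (hw i).le (sq_nonneg ((U i k - appL T U i k) -
      appL T (fun i k => U i k - appR T' U i k) i k))]
  have h5 : ∑ i, ∑ k, (w i ^ 2 + w i * w' k) * U i k ^ 2 =
    ∑ i, ∑ k, w i ^ 2 * U i k ^ 2 + ∑ i, ∑ k, w i * w' k * U i k ^ 2 := by
    simp only [← Finset.sum_add_distrib, add_mul]
  rw [h5]; nlinarith

lemma app_est_total (h : ProjData w C c T) (h' : ProjData w' C' c T') (hc : 0 ≤ c)
    (hw : ∀ i, 1 ≤ w i) (hw' : ∀ i, 1 ≤ w' i) (U : ι → κ → ℝ) :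
    ∑ i, ∑ k, (w i + w' k - 1) * (U i k - appL T (appR T' U) i k) ^ 2 ≤
      9 * c * ∑ i, ∑ k, (w i + w' k - 1) ^ 2 * U i k ^ 2 := by
  have hw0 : ∀ i, 0 < w i := fun i => by linarith [hw i]
  have hw0' : ∀ i, 0 < w' i := fun i => by linarith [hw' i]
  have h1 := app_est h h' hc hw0 U
  have h2 := app_est h' h hc hw0' (fun k i => U i k)
  have hcm : ∀ i k, appL T' (appR T (fun k i => U i k)) k i = appL T (appR T' U) i k := by
    intro i k
    rw [app_comm]; rfl
  simp only [hcm] at h2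
  rw [Finset.sum_comm] at h2
  rw [Finset.sum_comm (f := fun k i => (w' k ^ 2 + w' k * w i) * U i k ^ 2)] at h2
  have h3 : ∑ i, ∑ k, (w i + w' k - 1) * (U i k - appL T (appR T' U) i k) ^ 2 ≤
    ∑ i, ∑ k, w i * (U i k - appL T (appR T' U) i k) ^ 2 +
    ∑ i, ∑ k, w' k * (U i k - appL T (appR T' U) i k) ^ 2 := by
    simp only [← Finset.sum_add_distrib]
    refine Finset.sum_le_sum fun i _ => Finset.sum_le_sum fun k _ => ?_
    nlinarith [sq_nonneg (U i k - appL T (appR T' U) i k)]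
  have h4 : ∑ i, ∑ k, (w i ^ 2 + w i * w' k) * U i k ^ 2 +
      ∑ i, ∑ k, (w' k ^ 2 + w' k * w i) * U i k ^ 2 ≤
      4 * ∑ i, ∑ k, (w i + w' k - 1) ^ 2 * U i k ^ 2 := by
    simp only [Finset.mul_sum, ← Finset.sum_add_distrib]
    refine Finset.sum_le_sum fun i _ => Finset.sum_le_sum fun k _ => ?_
    rw [← add_mul, ← mul_assoc]
    refine mul_le_mul_of_nonneg_right ?_ (sq_nonneg _)
    nlinarith [hw i, hw' k]
  have h5 : 0 ≤ ∑ i, ∑ k, (w i + w' k - 1) ^ 2 * U i k ^ 2 :=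
    Finset.sum_nonneg fun i _ => Finset.sum_nonneg fun k _ => by positivity
  have h6 := mul_le_mul_of_nonneg_left h4 hc
  have h7 := mul_nonneg hc h5
  nlinarith

lemma core_mixed (h : ProjData w C c T) (h' : ProjData w' C' c T') (hc : 0 ≤ c)
    (hw : ∀ i, 1 ≤ w i) (hw' : ∀ i, 1 ≤ w' i) (U V : ι → κ → ℝ) (hV : V ∈ tens C C')
    (ho : ∀ Z ∈ tens C C', ∑ i, ∑ k, (w i * w' k) * (U i k - V i k) * Z i k = 0) :
    ∑ i, ∑ k, (w i + w' k - 1) * (U i k - V i k) ^ 2 ≤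
      9 * c * ∑ i, ∑ k, (w i + w' k - 1) ^ 2 * U i k ^ 2 := by
  have hVP : V = appL T (appR T' U) := by
    set P := appL T (appR T' U) with hP
    have hD : V - P ∈ tens C C' := Submodule.sub_mem _ hV (app_mem h.mem h'.mem U)
    have h1 := ho _ hD
    have h2 := app_orth h h' U hD
    rw [← hP] at h2
    have h3 : ∑ i, ∑ k, (w i * w' k) * (V i k - P i k) ^ 2 = 0 := by
      have : ∑ i, ∑ k, (w i * w' k) * (V i k - P i k) ^ 2 =
        ∑ i, ∑ k, (w i * w' k) * (U i k - P i k) * (V - P) i k -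
        ∑ i, ∑ k, (w i * w' k) * (U i k - V i k) * (V - P) i k := by
        simp only [← Finset.sum_sub_distrib]
        refine Finset.sum_congr rfl fun i _ => Finset.sum_congr rfl fun k _ => ?_
        simp only [Pi.sub_apply]; ring
      rw [this, h1, h2, sub_zero]
    have hp : ∀ i k, 0 < w i * w' k := fun i k =>
      mul_pos (by linarith [hw i]) (by linarith [hw' k])
    have hn : ∀ i k, 0 ≤ (w i * w' k) * (V i k - P i k) ^ 2 := fun i k =>
      mul_nonneg (hp i k).le (sq_nonneg _)
    rw [Finset.sum_eq_zero_iff_of_nonneg (fun i _ => Finset.sum_nonneg fun k _ => hn i k)] at h3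
    ext i k
    have h4 := h3 i (Finset.mem_univ i)
    rw [Finset.sum_eq_zero_iff_of_nonneg (fun k _ => hn i k)] at h4
    have h5 := h4 k (Finset.mem_univ k)
    have h6 := (mul_eq_zero.1 h5).resolve_left (hp i k).ne'
    exact sub_eq_zero.1 (pow_eq_zero_iff two_ne_zero |>.1 h6)
  rw [hVP]
  exact app_est_total h h' hc hw hw' U

lemma core_gal (h : ProjData w C c T) (h' : ProjData w' C' c T') (hc : 0 ≤ c)
    (hw : ∀ i, 1 ≤ w i) (hw' : ∀ i, 1 ≤ w' i) (U V : ι → κ → ℝ) (hV : V ∈ tens C C')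
    (ho : ∀ Z ∈ tens C C', ∑ i, ∑ k, (w i + w' k - 1) * (U i k - V i k) * Z i k = 0) :
    ∑ i, ∑ k, (w i + w' k - 1) * (U i k - V i k) ^ 2 ≤
      9 * c * ∑ i, ∑ k, (w i + w' k - 1) ^ 2 * U i k ^ 2 ∧
    ∑ i, ∑ k, (U i k - V i k) ^ 2 ≤
      9 * c * ∑ i, ∑ k, (w i + w' k - 1) * U i k ^ 2 := by
  have hp : ∀ i k, 0 < w i + w' k - 1 := fun i k => by linarith [hw i, hw' k]
  -- best approximation
  have best : ∀ Z ∈ tens C C', ∑ i, ∑ k, (w i + w' k - 1) * (U i k - V i k) ^ 2 ≤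
      ∑ i, ∑ k, (w i + w' k - 1) * (U i k - Z i k) ^ 2 := by
    intro Z hZ
    have h1 := ho _ (Submodule.sub_mem _ hV hZ)
    have h2 : ∑ i, ∑ k, (w i + w' k - 1) * (U i k - Z i k) ^ 2 =
      ∑ i, ∑ k, (w i + w' k - 1) * (U i k - V i k) ^ 2 +
      ∑ i, ∑ k, (w i + w' k - 1) * (V i k - Z i k) ^ 2 +
      2 * ∑ i, ∑ k, (w i + w' k - 1) * (U i k - V i k) * (V - Z) i k := by
      simp only [Finset.mul_sum, ← Finset.sum_add_distrib]
      refine Finset.sum_congr rfl fun i _ => Finset.sum_congr rfl fun k _ => ?_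
      simp only [Pi.sub_apply]; ring
    have h3 : 0 ≤ ∑ i, ∑ k, (w i + w' k - 1) * (V i k - Z i k) ^ 2 :=
      Finset.sum_nonneg fun i _ => Finset.sum_nonneg fun k _ =>
        mul_nonneg (hp i k).le (sq_nonneg _)
    rw [h1] at h2; linarith
  refine ⟨(best _ (app_mem h.mem h'.mem U)).trans (app_est_total h h' hc hw hw' U), ?_⟩
  set E : ι → κ → ℝ := fun i k => U i k - V i k with hE
  set z : ι → κ → ℝ := fun i k => E i k / (w i + w' k - 1) with hz
  set P := appL T (appR T' z) with hP
  set X := ∑ i, ∑ k, E i k ^ 2 with hX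
  have hX0 : 0 ≤ X := Finset.sum_nonneg fun i _ => Finset.sum_nonneg fun k _ => sq_nonneg _
  set Y := ∑ i, ∑ k, (w i + w' k - 1) * E i k ^ 2 with hY
  have hY0 : 0 ≤ Y := Finset.sum_nonneg fun i _ => Finset.sum_nonneg fun k _ =>
        mul_nonneg (hp i k).le (sq_nonneg _)
  have hYU : Y ≤ ∑ i, ∑ k, (w i + w' k - 1) * U i k ^ 2 := by
    have := best 0 (Submodule.zero_mem _)
    simpa using this
  have hzE : ∀ i k, (w i + w' k - 1) * z i k = E i k := by
    intro i k; simp only [hz]; field_simp [(hp i k).ne']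
  have e1 : X = ∑ i, ∑ k, (w i + w' k - 1) * (z i k - P i k) * E i k := by
    have h1 := ho P (app_mem h.mem h'.mem z)
    rw [← sub_eq_zero, hX]
    simp only [← Finset.sum_sub_distrib]
    rw [← h1]
    refine Finset.sum_congr rfl fun i _ => Finset.sum_congr rfl fun k _ => ?_
    have hEi : E i k = U i k - V i k := rfl
    linear_combination (E i k) * hEi - (U i k - V i k) * hzE i k
  have e2 : ∑ i, ∑ k, (w i + w' k - 1) * (z i k - P i k) ^ 2 ≤ 9 * c * X := by
    refine (app_est_total h h' hc hw hw' z).trans_eq ?_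
    congr 1
    refine Finset.sum_congr rfl fun i _ => Finset.sum_congr rfl fun k _ => ?_
    rw [← mul_pow, hzE]
  have e3 : X ^ 2 ≤ (∑ i, ∑ k, (w i + w' k - 1) * (z i k - P i k) ^ 2) * Y := by
    rw [e1, hY]
    simp only [← Fintype.sum_prod_type']
    have := Finset.sum_mul_sq_le_sq_mul_sq Finset.univ
      (fun x : ι × κ => √(w x.1 + w' x.2 - 1) * (z x.1 x.2 - P x.1 x.2))
      (fun x : ι × κ => √(w x.1 + w' x.2 - 1) * E x.1 x.2)
    have hs : ∀ x : ι × κ, √(w x.1 + w' x.2 - 1) ^ 2 = w x.1 + w' x.2 - 1 :=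
      fun x => Real.sq_sqrt (hp _ _).le
    simp only [mul_pow, hs] at this
    refine le_trans (le_of_eq ?_) this
    congr 1
    refine Finset.sum_congr rfl fun x _ => ?_
    linear_combination (-(z x.1 x.2 - P x.1 x.2) * E x.1 x.2) * hs x
  rcases hX0.eq_or_lt with h0 | h0
  · rw [← h0]; exact mul_nonneg (by positivity) (hY0.trans hYU)
  · have h1 : X * X ≤ (9 * c * Y) * X := by
      have := mul_le_mul_of_nonneg_right e2 hY0
      nlinarith
    exact (le_of_mul_le_mul_right h1 h0).trans
      (mul_le_mul_of_nonneg_left hYU (by positivity))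

end core
end SplineMG
namespace SplineMG

lemma icc_sub_piece (m j : ℕ) (hm : 0 < m) :
    Icc ((j : ℝ) / m) (((j : ℝ) + 1) / m) ⊆ pieceSet m j := by
  intro x hx
  left
  split_ifs with h
  · subst h
    have := hx.2
    simpa using this
  · exact hx

lemma piece_cover (m : ℕ) (hm : 0 < m) (x : ℝ) : ∃ j : Fin m, x ∈ pieceSet m j := by
  have hm' : (0 : ℝ) < m := by exact_mod_cast hm
  by_cases h1 : x ≤ 1 / m
  · refine ⟨⟨0, hm⟩, ?_⟩
    left; simpa using h1
  · push Not at h1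
    by_cases h2 : ((m : ℝ) - 1) / m ≤ x
    · refine ⟨⟨m - 1, by omega⟩, ?_⟩
      right; simpa using h2
    · push Not at h2
      have hx0 : 0 ≤ (m : ℝ) * x := by
        have : 0 < x := lt_trans (by positivity) h1
        positivity
      have hlt : (m : ℝ) * x < m := by
        rw [lt_div_iff₀ hm'] at h2; linarith
      have hfl := Nat.floor_le hx0
      have hfl2 := Nat.lt_floor_add_one ((m : ℝ) * x)
      refine ⟨⟨⌊(m : ℝ) * x⌋₊, ?_⟩, ?_⟩
      · have : ((⌊(m : ℝ) * x⌋₊ : ℕ) : ℝ) < m := lt_of_le_of_lt hfl hlt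
        exact_mod_cast this
      · apply icc_sub_piece m _ hm
        constructor
        · rw [div_le_iff₀ hm']; linarith
        · rw [le_div_iff₀ hm']; linarith

/-- the spline space as a submodule -/
def Spl (m p : ℕ) : Submodule ℝ (ℝ → ℝ) where
  carrier := {u | IsSpline m p u}
  add_mem' := by
    rintro a b ⟨ha, ha'⟩ ⟨hb, hb'⟩
    refine ⟨ha.add hb, fun j hj => ?_⟩
    obtain ⟨q, hq, h1⟩ := ha' j hj
    obtain ⟨r, hr, h2⟩ := hb' j hj
    refine ⟨q + r, (Polynomial.natDegree_add_le _ _).trans (max_le hq hr), fun x hx => ?_⟩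
    simp [h1 x hx, h2 x hx]
  zero_mem' := ⟨contDiffOn_const, fun j hj => ⟨0, by simp, by simp⟩⟩
  smul_mem' := by
    rintro c a ⟨ha, ha'⟩
    refine ⟨contDiffOn_const.smul ha, fun j hj => ?_⟩
    obtain ⟨q, hq, h1⟩ := ha' j hj
    refine ⟨c • q, (Polynomial.natDegree_smul_le _ _).trans hq, fun x hx => ?_⟩
    simp [h1 x hx]

lemma mem_Spl {m p u} : u ∈ Spl m p ↔ IsSpline m p u := Iff.rfl

lemma Spl_finite (m p : ℕ) (hm : 0 < m) : Module.Finite ℝ (Spl m p) := by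
  classical
  choose c hc using piece_cover m hm
  let L : (Fin m → Fin (p + 1) → ℝ) →ₗ[ℝ] (ℝ → ℝ) :=
    { toFun := fun a x => ∑ i, a (c x) i * x ^ (i : ℕ)
      map_add' := by
        intro a b; ext x; simp [add_mul, Finset.sum_add_distrib]
      map_smul' := by
        intro r a; ext x; simp [Finset.mul_sum, mul_assoc] }
  have hle : Spl m p ≤ LinearMap.range L := by
    rintro u ⟨_, hu⟩
    choose! q hq h using hu
    refine ⟨fun j i => (q j).coeff i, ?_⟩
    ext x
    change ∑ i : Fin (p + 1), (q (c x)).coeff i * x ^ (i : ℕ) = u x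
    rw [h (c x) (c x).2 x (hc x), Polynomial.eval_eq_sum_range' (n := p + 1)
      (Nat.lt_succ_of_le (hq _ (c x).2)), Finset.sum_range]
  exact Submodule.finiteDimensional_of_le hle

lemma spline_continuous {m p u} (hm : 0 < m) (hu : IsSpline m p u) : Continuous u := by
  have hcl : ∀ j : Fin m, IsClosed (pieceSet m j) := by
    intro j
    unfold pieceSet
    apply IsClosed.union <;> split_ifs
    · exact isClosed_Iic
    · exact isClosed_Icc
    · exact isClosed_Ici
    · exact isClosed_empty
  refine (locallyFinite_of_finite (fun j : Fin m => pieceSet m j)).continuous ?_ hcl ?_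
  · exact eq_univ_of_forall fun x => mem_iUnion.2 (piece_cover m hm x)
  · intro j
    obtain ⟨q, _, h⟩ := hu.2 j j.2
    exact q.continuous.continuousOn.congr h

/-- knots -/
def Z (m : ℕ) : Set ℝ := range (fun j : ℕ => (j : ℝ) / m)

def mu : Measure ℝ := volume.restrict (Ioo (0 : ℝ) 1)

instance : IsFiniteMeasure mu := by unfold mu; infer_instance

/-- good points -/
def Good (m : ℕ) : Set ℝ := Ioo (0 : ℝ) 1 \ Z m

lemma ae_good (m : ℕ) : ∀ᵐ x ∂mu, x ∈ Good m := by
  have h1 : ∀ᵐ x ∂mu, x ∈ Ioo (0 : ℝ) 1 := ae_restrict_mem measurableSet_Ioo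
  have h2 : ∀ᵐ x ∂mu, x ∉ Z m := by
    apply ae_restrict_of_ae
    exact (countable_range _).ae_notMem volume
  filter_upwards [h1, h2] with x a b using ⟨a, b⟩

lemma good_piece {m : ℕ} (hm : 0 < m) {x : ℝ} (hx : x ∈ Good m) :
    ∃ j < m, x ∈ Ioo ((j : ℝ) / m) (((j : ℝ) + 1) / m) := by
  obtain ⟨⟨h0, h1⟩, h2⟩ := hx
  have hm' : (0 : ℝ) < m := by exact_mod_cast hm
  have hx0 : 0 ≤ (m : ℝ) * x := by positivity
  have hfl := Nat.floor_le hx0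
  have hfl2 := Nat.lt_floor_add_one ((m : ℝ) * x)
  refine ⟨⌊(m : ℝ) * x⌋₊, ?_, ?_, ?_⟩
  · have : ((⌊(m : ℝ) * x⌋₊ : ℕ) : ℝ) < m := lt_of_le_of_lt hfl (by nlinarith)
    exact_mod_cast this
  · refine lt_of_le_of_ne ?_ fun h => h2 ⟨_, h⟩
    rw [div_le_iff₀ hm']; linarith
  · rw [lt_div_iff₀ hm']; linarith

lemma spline_local {m p u} (hm : 0 < m) (hu : IsSpline m p u) :
    ∃ q : ℕ → Polynomial ℝ, ∀ x ∈ Good m, ∃ j < m, HasDerivAt u ((q j).derivative.eval x) x := by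
  choose! q hq h using hu.2
  refine ⟨q, fun x hx => ?_⟩
  obtain ⟨j, hj, hxj⟩ := good_piece hm hx
  refine ⟨j, hj, ((q j).hasDerivAt x).congr_of_eventuallyEq ?_⟩
  filter_upwards [isOpen_Ioo.mem_nhds hxj] with y hy
  exact h j hj y (icc_sub_piece m j hm (Ioo_subset_Icc_self hy))

lemma spline_diff {m p u} (hm : 0 < m) (hu : IsSpline m p u) {x} (hx : x ∈ Good m) :
    DifferentiableAt ℝ u x := by
  obtain ⟨q, h⟩ := spline_local hm hu
  obtain ⟨j, _, h⟩ := h x hx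
  exact h.differentiableAt

/-- measurable and essentially bounded -/
def Nice (f : ℝ → ℝ) : Prop := Measurable f ∧ ∃ B : ℝ, ∀ᵐ x ∂mu, |f x| ≤ B

lemma Nice.integrable_mul {f g : ℝ → ℝ} (hf : Nice f) (hg : Nice g) :
    Integrable (fun x => f x * g x) mu := by
  obtain ⟨hf, A, hA⟩ := hf
  obtain ⟨hg, B, hB⟩ := hg
  refine Integrable.of_bound (hf.mul hg).aestronglyMeasurable (A * B) ?_
  filter_upwards [hA, hB] with x h1 h2
  rw [Real.norm_eq_abs, abs_mul]
  exact mul_le_mul h1 h2 (abs_nonneg _) ((abs_nonneg _).trans h1)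

lemma spline_nice {m p u} (hm : 0 < m) (hu : IsSpline m p u) : Nice u := by
  have hc := spline_continuous hm hu
  refine ⟨hc.measurable, ?_⟩
  obtain ⟨B, hB⟩ := isCompact_Icc.exists_bound_of_continuousOn (s := Icc (0:ℝ) 1) hc.continuousOn
  refine ⟨B, ?_⟩
  filter_upwards [ae_good 1] with x hx
  exact hB x (Ioo_subset_Icc_self hx.1)

lemma spline_deriv_nice {m p u} (hm : 0 < m) (hu : IsSpline m p u) : Nice (deriv u) := by
  refine ⟨measurable_deriv u, ?_⟩
  obtain ⟨q, h⟩ := spline_local hm hu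
  have hb : ∀ j, ∃ B, ∀ x ∈ Icc (0:ℝ) 1, ‖(q j).derivative.eval x‖ ≤ B := fun j =>
    isCompact_Icc.exists_bound_of_continuousOn (q j).derivative.continuous.continuousOn
  choose B hB using hb
  refine ⟨∑ j ∈ Finset.range m, |B j|, ?_⟩
  filter_upwards [ae_good m] with x hx
  obtain ⟨j, hj, hd⟩ := h x hx
  rw [hd.deriv]
  exact ((hB j x (Ioo_subset_Icc_self hx.1)).trans (le_abs_self _)).trans
    (Finset.single_le_sum (f := fun j => |B j|) (fun _ _ => abs_nonneg _) (Finset.mem_range.2 hj))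

lemma spline_definite {m p u} (hm : 0 < m) (hu : IsSpline m p u)
    (h : ∫ x, u x * u x ∂mu = 0) : u = 0 := by
  have hc := spline_continuous hm hu
  have hn := spline_nice hm hu
  rw [integral_eq_zero_iff_of_nonneg (fun x => mul_self_nonneg _) (hn.integrable_mul hn)] at h
  have h1 : (fun x => u x * u x) =ᵐ[volume.restrict (Ioo (0:ℝ) 1)] (fun _ => 0) := h
  have h2 := Measure.eqOn_open_of_ae_eq h1 isOpen_Ioo (hc.mul hc).continuousOn continuousOn_const
  have hm' : (0 : ℝ) < m := by exact_mod_cast hm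
  ext x
  obtain ⟨j, hj⟩ := piece_cover m hm x
  obtain ⟨q, _, hq⟩ := hu.2 j j.2
  have hq0 : q = 0 := by
    refine Polynomial.eq_zero_of_infinite_isRoot q (Set.Infinite.mono ?_
      (Ioo_infinite (a := ((j : ℕ) : ℝ) / m) (b := (((j : ℕ) : ℝ) + 1) / m) ?_))
    · intro y hy
      have hy1 : y ∈ Ioo (0:ℝ) 1 := by
        refine ⟨lt_of_le_of_lt (by positivity) hy.1, lt_of_lt_of_le hy.2 ?_⟩
        rw [div_le_one hm']
        exact_mod_cast j.2
      have := h2 hy1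
      simp only [mul_self_eq_zero] at this
      change q.eval y = 0
      rw [← hq y (icc_sub_piece m j hm (Ioo_subset_Icc_self hy)), this]
    · rw [div_lt_div_iff_of_pos_right hm']; linarith
  rw [hq x hj, hq0]; simp

end SplineMG
namespace SplineMG

lemma simul_diag {V : Type*} [AddCommGroup V] [Module ℝ V] [Module.Finite ℝ V]
    (M K : V →ₗ[ℝ] V →ₗ[ℝ] ℝ) (hM : ∀ u v, M u v = M v u) (hK : ∀ u v, K u v = K v u)
    (hM0 : ∀ u, 0 ≤ M u u) (hMd : ∀ u, M u u = 0 → u = 0) :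
    ∃ (n : ℕ) (b : Module.Basis (Fin n) ℝ V) (κ : Fin n → ℝ),
      (∀ k l, M (b k) (b l) = if k = l then 1 else 0) ∧
      (∀ k l, K (b k) (b l) = if k = l then κ k else 0) := by
  classical
  let core : InnerProductSpace.Core ℝ V :=
    { inner := fun u v => M u v
      conj_inner_symm := fun u v => by simpa using hM v u
      re_inner_nonneg := fun u => by simpa using hM0 u
      add_left := fun u v w => by simp
      smul_left := fun u v r => by simp
      definite := fun u h => hMd u h }
  let _ : NormedAddCommGroup V := core.toNormedAddCommGroup
  let _ : InnerProductSpace ℝ V := InnerProductSpace.ofCore core.toCore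
  have hin : ∀ u v : V, inner ℝ u v = M u v := fun u v => rfl
  let e := stdOrthonormalBasis ℝ V
  let T : V →ₗ[ℝ] V := ∑ i, (K (e i)).smulRight (e i)
  have hT : ∀ u v, inner ℝ (T u) v = K u v := by
    intro u v
    have h1 : T u = ∑ i, K (e i) u • e i := by simp [T]
    conv_rhs => rw [← e.sum_repr' v]
    rw [h1, sum_inner, map_sum]
    refine Finset.sum_congr rfl fun i _ => ?_
    rw [real_inner_smul_left, map_smul, smul_eq_mul, hK, mul_comm]
  have hs : T.IsSymmetric := by
    intro u v
    rw [hT, real_inner_comm, hT, hK]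
  let b := hs.eigenvectorBasis rfl
  refine ⟨_, b.toBasis, hs.eigenvalues rfl, ?_, ?_⟩
  · intro k l
    rw [← hin]
    have := orthonormal_iff_ite.1 b.orthonormal k l
    simpa using this
  · intro k l
    rw [← hT]
    have h1 : T (b k) = (hs.eigenvalues rfl k : ℝ) • b k := hs.apply_eigenvectorBasis rfl k
    have := orthonormal_iff_ite.1 b.orthonormal k l
    rw [OrthonormalBasis.coe_toBasis, h1, real_inner_smul_left, this]
    simp

structure Eig (m p n : ℕ) (ψ : Fin n → ℝ → ℝ) (κ : Fin n → ℝ) : Prop where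
  spl : ∀ k, IsSpline m p (ψ k)
  span : ∀ u, IsSpline m p u → ∃ a : Fin n → ℝ, ∀ x, u x = ∑ k, a k * ψ k x
  mass : ∀ k l, ∫ x, ψ k x * ψ l x ∂mu = if k = l then 1 else 0
  stiff : ∀ k l, ∫ x, deriv (ψ k) x * deriv (ψ l) x ∂mu = if k = l then κ k else 0
  nonneg : ∀ k, 0 ≤ κ k

lemma exists_eig (m p : ℕ) (hm : 0 < m) : ∃ n ψ κ, Eig m p n ψ κ := by
  have := Spl_finite m p hm
  have n0 : ∀ u : Spl m p, Nice u.1 := fun u => spline_nice hm u.2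
  have n1 : ∀ u : Spl m p, Nice (deriv u.1) := fun u => spline_deriv_nice hm u.2
  have hda : ∀ u v : Spl m p, ∀ᵐ x ∂mu, deriv (u + v : Spl m p).1 x = deriv u.1 x + deriv v.1 x := by
    intro u v
    filter_upwards [ae_good m] with x hx
    exact deriv_add (spline_diff hm u.2 hx) (spline_diff hm v.2 hx)
  have hds : ∀ (c : ℝ) (u : Spl m p), ∀ x, deriv (c • u : Spl m p).1 x = c * deriv u.1 x := by
    intro c u x
    exact deriv_const_mul_field c
  let M : Spl m p →ₗ[ℝ] Spl m p →ₗ[ℝ] ℝ := LinearMap.mk₂ ℝ (fun u v => ∫ x, u.1 x * v.1 x ∂mu)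
    (by intro a b c
        rw [← integral_add ((n0 a).integrable_mul (n0 c)) ((n0 b).integrable_mul (n0 c))]
        congr 1; ext x; simp; ring)
    (by intro a b c
        rw [smul_eq_mul, ← integral_const_mul]
        congr 1; ext x; simp; ring)
    (by intro a b c
        rw [← integral_add ((n0 a).integrable_mul (n0 b)) ((n0 a).integrable_mul (n0 c))]
        congr 1; ext x; simp; ring)
    (by intro a b c
        rw [smul_eq_mul, ← integral_const_mul]
        congr 1; ext x; simp; ring)
  let K : Spl m p →ₗ[ℝ] Spl m p →ₗ[ℝ] ℝ := LinearMap.mk₂ ℝ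
    (fun u v => ∫ x, deriv u.1 x * deriv v.1 x ∂mu)
    (by intro a b c
        rw [← integral_add ((n1 a).integrable_mul (n1 c)) ((n1 b).integrable_mul (n1 c))]
        apply integral_congr_ae
        filter_upwards [hda a b] with x hx
        rw [hx]; ring)
    (by intro a b c
        rw [smul_eq_mul, ← integral_const_mul]
        congr 1; ext x; rw [hds]; ring)
    (by intro a b c
        rw [← integral_add ((n1 a).integrable_mul (n1 b)) ((n1 a).integrable_mul (n1 c))]
        apply integral_congr_ae
        filter_upwards [hda b c] with x hx
        rw [hx]; ring)
    (by intro a b c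
        rw [smul_eq_mul, ← integral_const_mul]
        congr 1; ext x; rw [hds]; ring)
  have eM : ∀ u v, M u v = ∫ x, u.1 x * v.1 x ∂mu := fun u v => rfl
  have eK : ∀ u v, K u v = ∫ x, deriv u.1 x * deriv v.1 x ∂mu := fun u v => rfl
  obtain ⟨n, b, κ, h1, h2⟩ := simul_diag M K
    (by intro u v; rw [eM, eM]; congr 1; ext x; ring)
    (by intro u v; rw [eK, eK]; congr 1; ext x; ring)
    (by intro u; rw [eM]; exact integral_nonneg fun x => mul_self_nonneg _)
    (by intro u h; exact Subtype.ext (spline_definite hm u.2 h))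
  refine ⟨n, fun k => (b k).1, κ, fun k => (b k).2, ?_, h1, h2, ?_⟩
  · intro u hu
    refine ⟨fun k => b.repr ⟨u, hu⟩ k, fun x => ?_⟩
    have := congrArg (fun v : Spl m p => v.1 x) (b.sum_repr ⟨u, hu⟩)
    refine this.symm.trans ?_
    simp only [Submodule.coe_sum, Finset.sum_apply]
    rfl
  · intro k
    have h3 := h2 k k
    rw [if_pos rfl, eK] at h3
    rw [← h3]
    exact integral_nonneg fun x => mul_self_nonneg _

end SplineMG
namespace SplineMG

def Dpsi {d n : ℕ} (ψ : Fin n → ℝ → ℝ) (s : Finset (Fin d)) (k : Fin n) (j : Fin d) : ℝ → ℝ :=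
  if j ∈ s then deriv (ψ k) else ψ k

def ev {d n : ℕ} (ψ : Fin n → ℝ → ℝ) (s : Finset (Fin d)) (a : (Fin d → Fin n) → ℝ)
    (x : Fin d → ℝ) : ℝ :=
  ∑ α, a α * ∏ j, Dpsi ψ s (α j) j (x j)

def lam {d n : ℕ} (κ : Fin n → ℝ) (α : Fin d → Fin n) : ℝ := 1 + ∑ i, κ (α i)

lemma cube_measure (d : ℕ) :
    (volume.restrict (cube d) : Measure (Fin d → ℝ)) = Measure.pi (fun _ => mu) := by
  unfold cube mu
  rw [volume_pi, Measure.restrict_pi_pi]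

lemma ae_cube_good (d m : ℕ) : ∀ᵐ x ∂(volume.restrict (cube d)), ∀ i, x i ∈ Good m := by
  rw [cube_measure, ae_all_iff]
  intro i
  exact (Measure.tendsto_eval_ae_ae (μ := fun _ : Fin d => mu) (i := i)).eventually (ae_good m)

section
variable {m p n d : ℕ} {ψ : Fin n → ℝ → ℝ} {κ : Fin n → ℝ}

lemma Eig.nice (h : Eig m p n ψ κ) (hm : 0 < m) (s : Finset (Fin d)) (k : Fin n) (j : Fin d) :
    Nice (Dpsi ψ s k j) := by
  unfold Dpsi
  split_ifs
  · exact spline_deriv_nice hm (h.spl k)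
  · exact spline_nice hm (h.spl k)

lemma Eig.int_D (h : Eig m p n ψ κ) (s : Finset (Fin d)) (k l : Fin n) (j : Fin d) :
    ∫ t, Dpsi ψ s k j t * Dpsi ψ s l j t ∂mu = if k = l then (if j ∈ s then κ k else 1) else 0 := by
  unfold Dpsi
  split_ifs with h1 h2 h2
  · rw [h.stiff, if_pos h2]
  · rw [h.stiff, if_neg h2]
  · rw [h.mass, if_pos h2]
  · rw [h.mass, if_neg h2]

lemma Eig.prod_int (h : Eig m p n ψ κ) (s : Finset (Fin d)) (α β : Fin d → Fin n) :
    ∏ j, ∫ t, Dpsi ψ s (α j) j t * Dpsi ψ s (β j) j t ∂mu =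
      if α = β then ∏ j ∈ s, κ (α j) else 0 := by
  simp only [h.int_D]
  split_ifs with hab
  · subst hab
    simp [Finset.prod_ite_mem]
  · obtain ⟨j, hj⟩ := Function.ne_iff.1 hab
    exact Finset.prod_eq_zero (Finset.mem_univ j) (by simp [hj])

lemma ev_mul (s : Finset (Fin d)) (a b : (Fin d → Fin n) → ℝ) (x : Fin d → ℝ) :
    ev ψ s a x * ev ψ s b x = ∑ α, ∑ β, a α * b β *
      ∏ j, (Dpsi ψ s (α j) j (x j) * Dpsi ψ s (β j) j (x j)) := by
  unfold ev
  rw [Finset.sum_mul_sum]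
  refine Finset.sum_congr rfl fun α _ => Finset.sum_congr rfl fun β _ => ?_
  rw [Finset.prod_mul_distrib]; ring

lemma Eig.integrable_term (h : Eig m p n ψ κ) (hm : 0 < m) (s : Finset (Fin d))
    (α β : Fin d → Fin n) (c : ℝ) :
    Integrable (fun x : Fin d → ℝ => c *
      ∏ j, (Dpsi ψ s (α j) j (x j) * Dpsi ψ s (β j) j (x j))) (volume.restrict (cube d)) := by
  rw [cube_measure]
  refine Integrable.const_mul ?_ c
  exact Integrable.fintype_prod (f := fun j t => Dpsi ψ s (α j) j t * Dpsi ψ s (β j) j t)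
    (fun j => (h.nice hm s _ j).integrable_mul (h.nice hm s _ j))

lemma Eig.integrable_ev (h : Eig m p n ψ κ) (hm : 0 < m) (s : Finset (Fin d))
    (a b : (Fin d → Fin n) → ℝ) :
    Integrable (fun x => ev ψ s a x * ev ψ s b x) (volume.restrict (cube d)) := by
  simp only [ev_mul]
  exact integrable_finsetSum _ fun α _ => integrable_finsetSum _ fun β _ =>
    h.integrable_term hm s α β _

lemma Eig.int_ev (h : Eig m p n ψ κ) (hm : 0 < m) (s : Finset (Fin d))
    (a b : (Fin d → Fin n) → ℝ) :
    ∫ x in cube d, ev ψ s a x * ev ψ s b x = ∑ α, (∏ j ∈ s, κ (α j)) * a α * b α := by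
  simp only [ev_mul]
  rw [integral_finsetSum _ fun α _ => integrable_finsetSum _ fun β _ =>
    h.integrable_term hm s α β _]
  refine Finset.sum_congr rfl fun α _ => ?_
  rw [integral_finsetSum _ fun β _ => h.integrable_term hm s α β _]
  have : ∀ β, ∫ x in cube d, a α * b β *
      ∏ j, (Dpsi ψ s (α j) j (x j) * Dpsi ψ s (β j) j (x j)) =
      if α = β then (∏ j ∈ s, κ (α j)) * a α * b β else 0 := by
    intro β
    rw [integral_const_mul, cube_measure,
      integral_fintype_prod_eq_prod (fun j t => Dpsi ψ s (α j) j t * Dpsi ψ s (β j) j t),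
      h.prod_int]
    split_ifs <;> ring
  simp only [this]
  simp

lemma Eig.pd_ev (h : Eig m p n ψ κ) (hm : 0 < m) {s : Finset (Fin d)} {i : Fin d} (hi : i ∉ s)
    (a : (Fin d → Fin n) → ℝ) {x : Fin d → ℝ} (hx : x i ∈ Good m) :
    pd d i (ev ψ s a) x = ev ψ (insert i s) a x := by
  unfold pd ev
  apply HasDerivAt.deriv
  refine HasDerivAt.fun_sum fun α _ => HasDerivAt.const_mul _ ?_
  have e1 : ∀ t, ∏ j, Dpsi ψ s (α j) j (Function.update x i t j) =
      ψ (α i) t * ∏ j ∈ Finset.univ.erase i, Dpsi ψ s (α j) j (x j) := by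
    intro t
    rw [← Finset.mul_prod_erase _ _ (Finset.mem_univ i)]
    congr 1
    · simp [Dpsi, hi]
    · refine Finset.prod_congr rfl fun j hj => ?_
      rw [Function.update_of_ne (Finset.ne_of_mem_erase hj)]
  have e2 : ∏ j, Dpsi ψ (insert i s) (α j) j (x j) =
      deriv (ψ (α i)) (x i) * ∏ j ∈ Finset.univ.erase i, Dpsi ψ s (α j) j (x j) := by
    rw [← Finset.mul_prod_erase _ _ (Finset.mem_univ i)]
    congr 1
    · simp [Dpsi]
    · refine Finset.prod_congr rfl fun j hj => ?_
      simp [Dpsi, Finset.mem_insert, Finset.ne_of_mem_erase hj]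
  simp only [e1]
  rw [e2]
  exact (spline_diff hm (h.spl (α i)) hx).hasDerivAt.mul_const _

lemma Eig.pd2_ev (h : Eig m p n ψ κ) (hm : 0 < m) {i l : Fin d} (hil : i ≠ l)
    (a : (Fin d → Fin n) → ℝ) {x : Fin d → ℝ} (hx : ∀ j, x j ∈ Good m) :
    pd d i (pd d l (ev ψ ∅ a)) x = ev ψ {i, l} a x := by
  have h1 : pd d i (pd d l (ev ψ ∅ a)) x = pd d i (ev ψ {l} a) x := by
    unfold pd
    congr 1
    ext t
    have := h.pd_ev hm (Finset.notMem_empty l) a (x := Function.update x i t)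
      (by rw [Function.update_of_ne hil.symm]; exact hx l)
    exact this
  rw [h1, h.pd_ev hm (by simpa using hil) a (hx i)]

lemma Eig.ipd_eq (h : Eig m p n ψ κ) (hm : 0 < m) (a b : (Fin d → Fin n) → ℝ) :
    ipd d (ev ψ ∅ a) (ev ψ ∅ b) = ∑ α, a α * b α := by
  unfold ipd
  rw [h.int_ev hm]; simp

lemma Eig.l2_eq (h : Eig m p n ψ κ) (hm : 0 < m) (a : (Fin d → Fin n) → ℝ) :
    l2normSqD d (ev ψ ∅ a) = ∑ α, a α ^ 2 := by
  unfold l2normSqD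
  simp only [pow_two]
  rw [h.int_ev hm]; simp

lemma Eig.aForm_eq (h : Eig m p n ψ κ) (hm : 0 < m) (a b : (Fin d → Fin n) → ℝ) :
    aForm d (ev ψ ∅ a) (ev ψ ∅ b) = ∑ α, lam κ α * a α * b α := by
  unfold aForm
  have : ∫ x in cube d, (∑ i, pd d i (ev ψ ∅ a) x * pd d i (ev ψ ∅ b) x) +
      ev ψ ∅ a x * ev ψ ∅ b x =
      ∫ x in cube d, (∑ i, ev ψ {i} a x * ev ψ {i} b x) + ev ψ ∅ a x * ev ψ ∅ b x := by
    apply integral_congr_ae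
    filter_upwards [ae_cube_good d m] with x hx
    congr 1
    refine Finset.sum_congr rfl fun i _ => ?_
    rw [h.pd_ev hm (Finset.notMem_empty i) a (hx i), h.pd_ev hm (Finset.notMem_empty i) b (hx i)]
    simp
  rw [this, integral_add (integrable_finsetSum _ fun i _ => h.integrable_ev hm _ a b)
    (h.integrable_ev hm _ a b), integral_finsetSum _ fun i _ => h.integrable_ev hm _ a b]
  simp only [h.int_ev hm, Finset.prod_singleton, Finset.prod_empty, one_mul]
  rw [Finset.sum_comm, ← Finset.sum_add_distrib]
  refine Finset.sum_congr rfl fun α _ => ?_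
  simp only [lam, ← Finset.sum_mul]; ring

lemma Eig.mixed_eq {e : ℕ} (h : Eig m p n ψ κ) (hm : 0 < m) (a b : (Fin (e + 2) → Fin n) → ℝ) :
    mixedForm e (ev ψ ∅ a) (ev ψ ∅ b) =
      ∑ α, ((1 + ∑ i : Fin (e + 1), κ (α i.castSucc)) * (1 + κ (α (Fin.last (e + 1))))) * a α * b α := by
  unfold mixedForm
  set l := Fin.last (e + 1) with hl
  have : ∀ᵐ x ∂(volume.restrict (cube (e + 2))),
      (∑ j : Fin (e + 2), if j = l then 0 else
        pd (e + 2) j (pd (e + 2) l (ev ψ ∅ a)) x * pd (e + 2) j (pd (e + 2) l (ev ψ ∅ b)) x +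
          pd (e + 2) j (ev ψ ∅ a) x * pd (e + 2) j (ev ψ ∅ b) x) +
      pd (e + 2) l (ev ψ ∅ a) x * pd (e + 2) l (ev ψ ∅ b) x + ev ψ ∅ a x * ev ψ ∅ b x =
      (∑ j : Fin (e + 1), (ev ψ {j.castSucc, l} a x * ev ψ {j.castSucc, l} b x +
          ev ψ {j.castSucc} a x * ev ψ {j.castSucc} b x)) +
      ev ψ {l} a x * ev ψ {l} b x + ev ψ ∅ a x * ev ψ ∅ b x := by
    filter_upwards [ae_cube_good (e + 2) m] with x hx
    have p1 : ∀ i c, pd (e + 2) i (ev ψ ∅ c) x = ev ψ {i} c x := fun i c => by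
      rw [h.pd_ev hm (Finset.notMem_empty i) c (hx i)]; simp
    congr 1
    rw [p1, p1]
    congr 1
    rw [Fin.sum_univ_castSucc, if_pos hl, add_zero]
    refine Finset.sum_congr rfl fun j _ => ?_
    have hj : j.castSucc ≠ l := (Fin.castSucc_lt_last j).ne
    rw [if_neg hj, p1, p1, h.pd2_ev hm hj a hx, h.pd2_ev hm hj b hx]
  rw [integral_congr_ae this]
  have I := fun s => h.integrable_ev (d := e + 2) hm s a b
  have I0 : ∀ j : Fin (e + 1), Integrable (fun x => ev ψ {j.castSucc, l} a x *
      ev ψ {j.castSucc, l} b x + ev ψ {j.castSucc} a x * ev ψ {j.castSucc} b x)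
      (volume.restrict (cube (e + 2))) := fun j => (I _).add (I _)
  have I1 : Integrable (fun x => ∑ j : Fin (e + 1), (ev ψ {j.castSucc, l} a x *
      ev ψ {j.castSucc, l} b x + ev ψ {j.castSucc} a x * ev ψ {j.castSucc} b x))
      (volume.restrict (cube (e + 2))) := integrable_finsetSum _ fun j _ => I0 j
  have I2 : Integrable (fun x => (∑ j : Fin (e + 1), (ev ψ {j.castSucc, l} a x *
      ev ψ {j.castSucc, l} b x + ev ψ {j.castSucc} a x * ev ψ {j.castSucc} b x)) +
      ev ψ {l} a x * ev ψ {l} b x)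
      (volume.restrict (cube (e + 2))) := I1.add (I _)
  rw [integral_add I2 (I _), integral_add I1 (I _), integral_finsetSum _ fun j _ => I0 j]
  have hs : ∀ j : Fin (e + 1), ∫ x in cube (e + 2),
      (ev ψ {j.castSucc, l} a x * ev ψ {j.castSucc, l} b x +
          ev ψ {j.castSucc} a x * ev ψ {j.castSucc} b x) =
      ∑ α, (κ (α j.castSucc) * κ (α l) + κ (α j.castSucc)) * a α * b α := by
    intro j
    have hj : j.castSucc ≠ l := (Fin.castSucc_lt_last j).ne
    rw [integral_add (I _) (I _), h.int_ev hm, h.int_ev hm, ← Finset.sum_add_distrib]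
    refine Finset.sum_congr rfl fun α _ => ?_
    rw [Finset.prod_pair hj, Finset.prod_singleton]; ring
  simp only [hs, h.int_ev hm, Finset.prod_singleton, Finset.prod_empty, one_mul]
  rw [Finset.sum_comm, ← Finset.sum_add_distrib, ← Finset.sum_add_distrib]
  refine Finset.sum_congr rfl fun α _ => ?_
  simp only [← Finset.sum_mul, Finset.sum_add_distrib]; ring

end
end SplineMG
namespace SplineMG

lemma piece_coarse (k j : ℕ) (hk : 0 < k) : pieceSet (2 * k) j ⊆ pieceSet k (j / 2) := by
  have hk' : (0 : ℝ) < k := by exact_mod_cast hk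
  rintro x (hx | hx)
  · left
    by_cases h0 : j = 0
    · subst h0
      simp only [if_true, Nat.zero_div, mem_Iic, Nat.cast_mul, Nat.cast_ofNat] at hx ⊢
      refine hx.trans ?_
      rw [div_le_div_iff₀ (by positivity) hk']; linarith
    · rw [if_neg h0] at hx
      obtain ⟨h1, h2⟩ := hx
      push_cast at h1 h2
      rw [div_le_iff₀ (by positivity)] at h1
      rw [le_div_iff₀ (by positivity)] at h2
      split_ifs with h3
      · have : j ≤ 1 := by omega
        have : (j : ℝ) ≤ 1 := by exact_mod_cast this
        rw [mem_Iic, le_div_iff₀ hk']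
        linarith
      · have e1 : 2 * (j / 2) ≤ j := by omega
        have e2 : j ≤ 2 * (j / 2) + 1 := by omega
        have e1' : 2 * ((j / 2 : ℕ) : ℝ) ≤ j := by exact_mod_cast e1
        have e2' : (j : ℝ) ≤ 2 * ((j / 2 : ℕ) : ℝ) + 1 := by exact_mod_cast e2
        constructor
        · rw [div_le_iff₀ hk']; linarith
        · rw [le_div_iff₀ hk']; linarith
  · right
    by_cases h : j = 2 * k - 1
    · rw [if_pos h] at hx
      rw [if_pos (by omega)]
      rw [mem_Ici] at hx ⊢
      push_cast at hx
      rw [div_le_iff₀ (by positivity)] at hx ⊢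
      linarith
    · rw [if_neg h] at hx; exact hx.elim

lemma spl_coarse {m p : ℕ} (hm : m % 2 = 0) (hm2 : 2 ≤ m) {u} (hu : IsSpline (m / 2) p u) :
    IsSpline m p u := by
  obtain ⟨k, rfl⟩ : ∃ k, m = 2 * k := ⟨m / 2, by omega⟩
  have : 2 * k / 2 = k := by omega
  rw [this] at hu
  refine ⟨hu.1, fun j hj => ?_⟩
  obtain ⟨q, hq, h⟩ := hu.2 (j / 2) (by omega)
  exact ⟨q, hq, fun x hx => h x (piece_coarse k j (by omega) hx)⟩

lemma coarse_le (d : ℕ) {m p : ℕ} (hm : m % 2 = 0) (hm2 : 2 ≤ m) :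
    TensorSplineCoarse d m p ≤ TensorSpline d m p := by
  apply Submodule.span_mono
  rintro u ⟨f, hf, rfl⟩
  exact ⟨f, fun i => spl_coarse hm hm2 (hf i), rfl⟩

/-- synthesis map -/
def syn {n : ℕ} (ψ : Fin n → ℝ → ℝ) (d : ℕ) :
    ((Fin d → Fin n) → ℝ) →ₗ[ℝ] ((Fin d → ℝ) → ℝ) where
  toFun a := ev ψ ∅ a
  map_add' a b := by
    ext x; simp [ev, add_mul, Finset.sum_add_distrib]
  map_smul' r a := by
    ext x; simp [ev, Finset.mul_sum, mul_assoc]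

lemma syn_apply {n : ℕ} (ψ : Fin n → ℝ → ℝ) (d : ℕ) (a) : syn ψ d a = ev ψ ∅ a := rfl

lemma syn_val {n : ℕ} (ψ : Fin n → ℝ → ℝ) (d : ℕ) (a) (x) :
    syn ψ d a x = ∑ α, a α * ∏ j, ψ (α j) (x j) := by
  simp [syn_apply, ev, Dpsi]

section
variable {m p n d : ℕ} {ψ : Fin n → ℝ → ℝ} {κ : Fin n → ℝ}

lemma Eig.syn_mem (h : Eig m p n ψ κ) (a : (Fin d → Fin n) → ℝ) :
    syn ψ d a ∈ TensorSpline d m p := by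
  have : syn ψ d a = ∑ α, a α • (fun x : Fin d → ℝ => ∏ j, ψ (α j) (x j)) := by
    ext x; rw [syn_val]; simp
  rw [this]
  exact Submodule.sum_mem _ fun α _ => Submodule.smul_mem _ _
    (Submodule.subset_span ⟨fun j => ψ (α j), fun j => h.spl _, rfl⟩)

lemma Eig.exists_syn (h : Eig m p n ψ κ) {u} (hu : u ∈ TensorSpline d m p) :
    ∃ a, u = syn ψ d a := by
  classical
  have : TensorSpline d m p ≤ LinearMap.range (syn ψ d) := by
    apply Submodule.span_le.2
    rintro u ⟨f, hf, rfl⟩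
    choose a ha using fun i => h.span (f i) (hf i)
    refine ⟨fun α => ∏ i, a i (α i), ?_⟩
    ext x
    rw [syn_val]
    simp only [ha]
    rw [Finset.prod_univ_sum, Fintype.piFinset_univ]
    refine Finset.sum_congr rfl fun α _ => ?_
    rw [Finset.prod_mul_distrib]
  obtain ⟨a, ha⟩ := this hu
  exact ⟨a, ha.symm⟩

lemma Eig.syn_inj (h : Eig m p n ψ κ) (hm : 0 < m) : Function.Injective (syn ψ d) := by
  rw [← LinearMap.ker_eq_bot, LinearMap.ker_eq_bot']
  intro a ha
  have h1 := h.l2_eq hm a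
  rw [← syn_apply, ha] at h1
  have h2 : l2normSqD d 0 = 0 := by simp [l2normSqD]
  rw [h2, eq_comm, Finset.sum_eq_zero_iff_of_nonneg (fun _ _ => sq_nonneg _)] at h1
  ext α
  simpa using h1 α (Finset.mem_univ α)

/-- coarse coefficient space -/
def Cc (ψ : Fin n → ℝ → ℝ) (m p d : ℕ) : Submodule ℝ ((Fin d → Fin n) → ℝ) :=
  (TensorSplineCoarse d m p).comap (syn ψ d)

lemma lam_ge (h : Eig m p n ψ κ) (α : Fin d → Fin n) : 1 ≤ lam κ α := by
  unfold lam
  have := Finset.sum_nonneg fun i (_ : i ∈ Finset.univ) => h.nonneg (α i)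
  linarith

lemma Eig.projData (h : Eig m p n ψ κ) (hm : m % 2 = 0) (hm2 : 2 ≤ m) {c : ℝ}
    (H : ∀ u : (Fin d → ℝ) → ℝ, u ∈ TensorSpline d m p →
        ∀ v : (Fin d → ℝ) → ℝ, IsGalerkinCoarseProj d m p u v →
          Real.sqrt (l2normSqD d (u - v)) ≤
            c * (1 / (m : ℝ)) * Real.sqrt (aForm d u u)) :
    ∃ T, ProjData (lam κ) (Cc ψ m p d) ((c * (1 / (m : ℝ))) ^ 2) T := by
  have hm0 : 0 < m := by omega
  obtain ⟨T, h1, h2⟩ := exists_proj (lam κ (d := d))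
    (fun α => lt_of_lt_of_le one_pos (lam_ge h α)) (Cc ψ m p d)
  refine ⟨T, h1, h2, fun v => ?_⟩
  have h3 := H (syn ψ d v) (h.syn_mem v) (syn ψ d (T v)) ⟨h1 v, fun w hw => by
    obtain ⟨b, rfl⟩ := h.exists_syn (coarse_le d hm hm2 hw)
    rw [← map_sub, syn_apply, syn_apply, h.aForm_eq hm0]
    exact h2 v b hw⟩
  rw [← map_sub, syn_apply, syn_apply, h.aForm_eq hm0, h.l2_eq hm0] at h3
  have h4 : 0 ≤ ∑ α, lam κ α * v α * v α := Finset.sum_nonneg fun α _ => by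
    rw [mul_assoc]
    exact mul_nonneg (zero_le_one.trans (lam_ge h α)) (mul_self_nonneg _)
  have h5 := pow_le_pow_left₀ (Real.sqrt_nonneg _) h3 2
  rw [mul_pow, Real.sq_sqrt (Finset.sum_nonneg fun _ _ => sq_nonneg _), Real.sq_sqrt h4] at h5
  simpa [pow_two, mul_assoc] using h5

lemma tensor_prod_mem {d1 d2 m p : ℕ} {F : (Fin d1 → ℝ) → ℝ} {G : (Fin d2 → ℝ) → ℝ}
    (hF : F ∈ TensorSpline d1 m p) (hG : G ∈ TensorSpline d2 m p) :
    (fun x : Fin (d1 + d2) → ℝ => F (fun i => x (Fin.castAdd d2 i)) *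
      G (fun i => x (Fin.natAdd d1 i))) ∈ TensorSpline (d1 + d2) m p := by
  induction hF using Submodule.span_induction with
  | mem F hF =>
    obtain ⟨f, hf, rfl⟩ := hF
    induction hG using Submodule.span_induction with
    | mem G hG =>
      obtain ⟨g, hg, rfl⟩ := hG
      refine Submodule.subset_span ⟨Fin.append f g, ?_, ?_⟩
      · intro i
        refine Fin.addCases (fun i => ?_) (fun i => ?_) i
        · rw [Fin.append_left]; exact hf i
        · rw [Fin.append_right]; exact hg i
      · ext x
        rw [Fin.prod_univ_add]
        simp
    | zero =>
      simp only [Pi.zero_apply, mul_zero]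
      exact Submodule.zero_mem (TensorSpline (d1 + d2) m p)
    | add a b _ _ ha hb =>
      convert Submodule.add_mem _ ha hb using 1
      ext x; simp [mul_add]
    | smul r a _ ha =>
      convert Submodule.smul_mem _ r ha using 1
      ext x; simp; ring
  | zero =>
    simp only [Pi.zero_apply, zero_mul]
    exact Submodule.zero_mem (TensorSpline (d1 + d2) m p)
  | add a b _ _ ha hb =>
    convert Submodule.add_mem _ ha hb using 1
    ext x; simp [add_mul]
  | smul r a _ ha =>
    convert Submodule.smul_mem _ r ha using 1
    ext x; simp; ring

/-- uncurrying of coefficients -/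
def unc (n d1 d2 : ℕ) : ((Fin d1 → Fin n) → (Fin d2 → Fin n) → ℝ) →ₗ[ℝ]
    ((Fin (d1 + d2) → Fin n) → ℝ) where
  toFun B α := B (fun i => α (Fin.castAdd d2 i)) (fun i => α (Fin.natAdd d1 i))
  map_add' _ _ := rfl
  map_smul' _ _ := rfl

lemma sum_append {d1 d2 n : ℕ} (f : (Fin (d1 + d2) → Fin n) → ℝ) :
    ∑ α, f α = ∑ i, ∑ k, f (Fin.append i k) := by
  rw [← (Fin.appendEquiv d1 d2).sum_comp, Fintype.sum_prod_type]
  rfl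

lemma syn_unc {d1 d2 : ℕ} (f : (Fin d1 → Fin n) → ℝ) (g : (Fin d2 → Fin n) → ℝ) :
    syn ψ (d1 + d2) (unc n d1 d2 (fun i k => f i * g k)) =
      fun x => syn ψ d1 f (fun i => x (Fin.castAdd d2 i)) *
        syn ψ d2 g (fun i => x (Fin.natAdd d1 i)) := by
  ext x
  simp only [syn_val]
  rw [sum_append, Finset.sum_mul_sum]
  refine Finset.sum_congr rfl fun i _ => Finset.sum_congr rfl fun k _ => ?_
  rw [Fin.prod_univ_add]
  simp only [unc, LinearMap.coe_mk, AddHom.coe_mk, Fin.append_left, Fin.append_right]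
  ring

lemma unc_mem {d1 d2 : ℕ} {B} (hB : B ∈ tens (Cc ψ m p d1) (Cc ψ m p d2)) :
    unc n d1 d2 B ∈ Cc ψ m p (d1 + d2) := by
  have : tens (Cc ψ m p d1) (Cc ψ m p d2) ≤ (Cc ψ m p (d1 + d2)).comap (unc n d1 d2) := by
    apply Submodule.span_le.2
    rintro U ⟨f, hf, g, hg, rfl⟩
    change syn ψ (d1 + d2) _ ∈ TensorSplineCoarse (d1 + d2) m p
    rw [syn_unc]
    exact tensor_prod_mem hf hg
  exact this hB

lemma Eig.unc_surj (h : Eig m p n ψ κ) (hm : m % 2 = 0) (hm2 : 2 ≤ m) {d1 d2 : ℕ} {b}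
    (hb : b ∈ Cc ψ m p (d1 + d2)) :
    ∃ B ∈ tens (Cc ψ m p d1) (Cc ψ m p d2), b = unc n d1 d2 B := by
  have key : TensorSplineCoarse (d1 + d2) m p ≤
      (tens (Cc ψ m p d1) (Cc ψ m p d2)).map ((syn ψ (d1 + d2)).comp (unc n d1 d2)) := by
    apply Submodule.span_le.2
    rintro u ⟨f, hf, rfl⟩
    have m1 : (fun x : Fin d1 → ℝ => ∏ i, f (Fin.castAdd d2 i) (x i)) ∈ TensorSplineCoarse d1 m p :=
      Submodule.subset_span ⟨fun i => f (Fin.castAdd d2 i), fun i => hf _, rfl⟩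
    have m2 : (fun x : Fin d2 → ℝ => ∏ i, f (Fin.natAdd d1 i) (x i)) ∈ TensorSplineCoarse d2 m p :=
      Submodule.subset_span ⟨fun i => f (Fin.natAdd d1 i), fun i => hf _, rfl⟩
    obtain ⟨a1, h1⟩ := h.exists_syn (coarse_le d1 hm hm2 m1)
    obtain ⟨a2, h2⟩ := h.exists_syn (coarse_le d2 hm hm2 m2)
    refine ⟨fun i k => a1 i * a2 k, Submodule.subset_span ⟨a1, ?_, a2, ?_, rfl⟩, ?_⟩
    · change syn ψ d1 a1 ∈ TensorSplineCoarse d1 m p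
      rw [← h1]; exact m1
    · change syn ψ d2 a2 ∈ TensorSplineCoarse d2 m p
      rw [← h2]; exact m2
    · rw [LinearMap.comp_apply, syn_unc, ← h1, ← h2]
      ext x
      rw [Fin.prod_univ_add]
  obtain ⟨B, hB, hB2⟩ := key hb
  exact ⟨B, hB, (h.syn_inj (by omega) hB2).symm⟩

lemma unc_append {d1 d2 : ℕ} (B) (i : Fin d1 → Fin n) (k : Fin d2 → Fin n) :
    unc n d1 d2 B (Fin.append i k) = B i k := by
  simp [unc]

lemma lam_append {d1 d2 : ℕ} (i : Fin d1 → Fin n) (k : Fin d2 → Fin n) :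
    lam κ (Fin.append i k) = lam κ i + lam κ k - 1 := by
  simp only [lam, Fin.sum_univ_add, Fin.append_left, Fin.append_right]; ring

lemma exists_unc {d1 d2 : ℕ} (a : (Fin (d1 + d2) → Fin n) → ℝ) : ∃ U, a = unc n d1 d2 U := by
  refine ⟨fun i k => a (Fin.append i k), ?_⟩
  ext α
  simp [unc, Fin.append_castAdd_natAdd]

end

lemma sqrt_bound {c h X Y : ℝ} (hc : 0 ≤ c * h) (H : X ≤ 9 * (c * h) ^ 2 * Y) :
    √X ≤ 3 * c * h * √Y := by
  have : 9 * (c * h) ^ 2 * Y = (3 * c * h) ^ 2 * Y := by ring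
  rw [this] at H
  refine (Real.sqrt_le_sqrt H).trans_eq ?_
  rw [Real.sqrt_mul (sq_nonneg _), Real.sqrt_sq (by nlinarith)]

end SplineMG
namespace SplineMG

section
variable {m p n e : ℕ} {ψ : Fin n → ℝ → ℝ} {κ : Fin n → ℝ}

lemma Eig.aForm_unc (h : Eig m p n ψ κ) (hm : 0 < m)
    (U V : (Fin (e + 1) → Fin n) → (Fin 1 → Fin n) → ℝ) :
    aForm (e + 2) (syn ψ (e + 2) (unc n (e + 1) 1 U)) (syn ψ (e + 2) (unc n (e + 1) 1 V)) =
      ∑ i, ∑ k, (lam κ i + lam κ k - 1) * U i k * V i k := by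
  refine (h.aForm_eq hm _ _).trans ((sum_append (d1 := e + 1) (d2 := 1) _).trans ?_)
  refine Finset.sum_congr rfl fun i _ => Finset.sum_congr rfl fun k _ => ?_
  rw [unc_append, unc_append, lam_append]

lemma Eig.ipd_unc (h : Eig m p n ψ κ) (hm : 0 < m)
    (U V : (Fin (e + 1) → Fin n) → (Fin 1 → Fin n) → ℝ) :
    ipd (e + 2) (syn ψ (e + 2) (unc n (e + 1) 1 U)) (syn ψ (e + 2) (unc n (e + 1) 1 V)) =
      ∑ i, ∑ k, U i k * V i k := by
  refine (h.ipd_eq hm _ _).trans ((sum_append (d1 := e + 1) (d2 := 1) _).trans ?_)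
  refine Finset.sum_congr rfl fun i _ => Finset.sum_congr rfl fun k _ => ?_
  rw [unc_append, unc_append]

lemma Eig.l2_unc (h : Eig m p n ψ κ) (hm : 0 < m)
    (U : (Fin (e + 1) → Fin n) → (Fin 1 → Fin n) → ℝ) :
    l2normSqD (e + 2) (syn ψ (e + 2) (unc n (e + 1) 1 U)) = ∑ i, ∑ k, U i k ^ 2 := by
  refine (h.l2_eq hm _).trans ((sum_append (d1 := e + 1) (d2 := 1) _).trans ?_)
  refine Finset.sum_congr rfl fun i _ => Finset.sum_congr rfl fun k _ => ?_
  rw [unc_append]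

lemma Eig.mixed_unc (h : Eig m p n ψ κ) (hm : 0 < m)
    (U V : (Fin (e + 1) → Fin n) → (Fin 1 → Fin n) → ℝ) :
    mixedForm e (syn ψ (e + 2) (unc n (e + 1) 1 U)) (syn ψ (e + 2) (unc n (e + 1) 1 V)) =
      ∑ i, ∑ k, (lam κ i * lam κ k) * U i k * V i k := by
  refine (h.mixed_eq hm _ _).trans ((sum_append (d1 := e + 1) (d2 := 1) _).trans ?_)
  refine Finset.sum_congr rfl fun i _ => Finset.sum_congr rfl fun k _ => ?_
  rw [unc_append, unc_append]
  have e1 : ∀ j : Fin (e + 1), Fin.append i k j.castSucc = i j := fun j => Fin.append_left i k j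
  have e2 : Fin.append i k (Fin.last (e + 1)) = k 0 := Fin.append_right i k 0
  simp only [e1, e2]
  simp [lam]

end

/-- (inductive step in the proof of Lemma `lemma:approx:dd`), for
`d = e + 2 ≥ 2`.  The norm `‖u‖_{A_d M_d⁻¹ A_d}` is encoded as `√(a(u,w))` where
`w = M_d⁻¹A_d u ∈ S^d` is characterized by `(w, z)_{L²} = a(u, z) ∀z ∈ S^d`.
If `‖(I−T_1)u‖_{M_1} ≤ c·h·‖u‖_{A_1}` on `S` and
`‖(I−T_{d−1})u‖_{M_{d−1}} ≤ c·h·‖u‖_{A_{d−1}}` on `S^{d−1}`, then there is `c′`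
depending only on `c` and `d` with
`‖(I − T_{d−1}⊗T_1)u‖_{A_d} ≤ c′·h·‖u‖_{A_d M_d⁻¹ A_d}`; consequently the
`A_d`-orthogonal projector `T_d` onto `(S_c)^d` satisfies
`‖(I−T_d)u‖_{A_d} ≤ c′·h·‖u‖_{A_d M_d⁻¹ A_d}` and hence
`‖(I−T_d)u‖_{M_d} ≤ c′·h·‖u‖_{A_d}` for all `u ∈ S^d`. -/
theorem coarse_approximation_inductive_step :
    ∀ c : ℝ, 0 < c → ∀ e : ℕ, ∃ c' : ℝ, 0 < c' ∧
      ∀ m p : ℕ, m % 2 = 0 → 2 ≤ m → 1 ≤ p →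
      (∀ u : (Fin 1 → ℝ) → ℝ, u ∈ TensorSpline 1 m p →
        ∀ v : (Fin 1 → ℝ) → ℝ, IsGalerkinCoarseProj 1 m p u v →
          Real.sqrt (l2normSqD 1 (u - v)) ≤
            c * (1 / (m : ℝ)) * Real.sqrt (aForm 1 u u)) →
      (∀ u : (Fin (e + 1) → ℝ) → ℝ, u ∈ TensorSpline (e + 1) m p →
        ∀ v : (Fin (e + 1) → ℝ) → ℝ, IsGalerkinCoarseProj (e + 1) m p u v →
          Real.sqrt (l2normSqD (e + 1) (u - v)) ≤
            c * (1 / (m : ℝ)) * Real.sqrt (aForm (e + 1) u u)) →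
      ∀ u : (Fin (e + 2) → ℝ) → ℝ, u ∈ TensorSpline (e + 2) m p →
      ∀ w : (Fin (e + 2) → ℝ) → ℝ,
        w ∈ TensorSpline (e + 2) m p →
        (∀ z ∈ TensorSpline (e + 2) m p, ipd (e + 2) w z = aForm (e + 2) u z) →
        (∀ v : (Fin (e + 2) → ℝ) → ℝ,
          v ∈ TensorSplineCoarse (e + 2) m p →
          (∀ z ∈ TensorSplineCoarse (e + 2) m p, mixedForm e (u - v) z = 0) →
          Real.sqrt (aForm (e + 2) (u - v) (u - v)) ≤
            c' * (1 / (m : ℝ)) * Real.sqrt (aForm (e + 2) u w)) ∧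
        (∀ v : (Fin (e + 2) → ℝ) → ℝ, IsGalerkinCoarseProj (e + 2) m p u v →
          Real.sqrt (aForm (e + 2) (u - v) (u - v)) ≤
            c' * (1 / (m : ℝ)) * Real.sqrt (aForm (e + 2) u w) ∧
          Real.sqrt (l2normSqD (e + 2) (u - v)) ≤
            c' * (1 / (m : ℝ)) * Real.sqrt (aForm (e + 2) u u)) := by
  intro c hc e
  refine ⟨3 * c, by positivity, ?_⟩
  intro m p hm hm2 _hp H1 H2 u hu w hw hwu
  have hm0 : 0 < m := by omega
  obtain ⟨n, ψ, κ, h⟩ := exists_eig m p hm0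
  obtain ⟨T', hT'⟩ := h.projData hm hm2 H1
  obtain ⟨T, hT⟩ := h.projData hm hm2 H2
  have hch : 0 ≤ c * (1 / (m : ℝ)) := by positivity
  have hC : 0 ≤ (c * (1 / (m : ℝ))) ^ 2 := by positivity
  -- coefficient representation
  have rep : ∀ {v : (Fin (e + 2) → ℝ) → ℝ}, v ∈ TensorSpline (e + 2) m p →
      ∃ V, v = syn ψ (e + 2) (unc n (e + 1) 1 V) := by
    intro v hv
    obtain ⟨a, rfl⟩ := h.exists_syn hv
    obtain ⟨V, rfl⟩ := exists_unc (d1 := e + 1) (d2 := 1) a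
    exact ⟨V, rfl⟩
  have repc : ∀ {v : (Fin (e + 2) → ℝ) → ℝ}, v ∈ TensorSplineCoarse (e + 2) m p →
      ∃ V ∈ tens (Cc ψ m p (e + 1)) (Cc ψ m p 1),
        v = syn ψ (e + 2) (unc n (e + 1) 1 V) := by
    intro v hv
    obtain ⟨a, rfl⟩ := h.exists_syn (coarse_le _ hm hm2 hv)
    obtain ⟨V, hV, rfl⟩ := h.unc_surj hm hm2 (d1 := e + 1) (d2 := 1) (b := a) hv
    exact ⟨V, hV, rfl⟩
  obtain ⟨U, rfl⟩ := rep hu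
  obtain ⟨W, rfl⟩ := rep hw
  have hW : ∀ i k, W i k = (lam κ i + lam κ k - 1) * U i k := by
    set D : (Fin (e + 1) → Fin n) → (Fin 1 → Fin n) → ℝ :=
      fun i k => W i k - (lam κ i + lam κ k - 1) * U i k with hD
    have h1 := hwu (syn ψ (e + 2) (unc n (e + 1) 1 D)) (h.syn_mem _)
    rw [h.ipd_unc hm0, h.aForm_unc hm0] at h1
    have h2 : ∑ i, ∑ k, D i k ^ 2 = 0 := by
      rw [← sub_eq_zero] at h1
      simp only [← Finset.sum_sub_distrib] at h1
      rw [← h1]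
      refine Finset.sum_congr rfl fun i _ => Finset.sum_congr rfl fun k _ => ?_
      have : D i k = W i k - (lam κ i + lam κ k - 1) * U i k := rfl
      linear_combination (D i k) * this
    intro i k
    rw [Finset.sum_eq_zero_iff_of_nonneg
      (fun i _ => Finset.sum_nonneg fun k _ => sq_nonneg _)] at h2
    have h3 := h2 i (Finset.mem_univ i)
    rw [Finset.sum_eq_zero_iff_of_nonneg (fun k _ => sq_nonneg _)] at h3
    have h4 := h3 k (Finset.mem_univ k)
    have h5 : D i k = 0 := pow_eq_zero_iff two_ne_zero |>.1 h4
    exact sub_eq_zero.1 h5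
  have eW : aForm (e + 2) (syn ψ (e + 2) (unc n (e + 1) 1 U))
      (syn ψ (e + 2) (unc n (e + 1) 1 W)) =
      ∑ i, ∑ k, (lam κ i + lam κ k - 1) ^ 2 * U i k ^ 2 := by
    rw [h.aForm_unc hm0]
    refine Finset.sum_congr rfl fun i _ => Finset.sum_congr rfl fun k _ => ?_
    rw [hW]; ring
  have sq : ∀ V : (Fin (e + 1) → Fin n) → (Fin 1 → Fin n) → ℝ,
      aForm (e + 2) (syn ψ (e + 2) (unc n (e + 1) 1 V)) (syn ψ (e + 2) (unc n (e + 1) 1 V)) =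
      ∑ i, ∑ k, (lam κ i + lam κ k - 1) * V i k ^ 2 := by
    intro V
    rw [h.aForm_unc hm0]
    refine Finset.sum_congr rfl fun i _ => Finset.sum_congr rfl fun k _ => ?_
    ring
  have sub : ∀ V, syn ψ (e + 2) (unc n (e + 1) 1 U) - syn ψ (e + 2) (unc n (e + 1) 1 V) =
      syn ψ (e + 2) (unc n (e + 1) 1 (U - V)) := by
    intro V
    rw [map_sub, ← map_sub (syn ψ (e + 2))]
  rw [eW]
  refine ⟨?_, ?_⟩
  · intro v hv hvo
    obtain ⟨V, hV, rfl⟩ := repc hv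
    rw [sub, sq]
    refine sqrt_bound hch (core_mixed hT hT' hC (lam_ge h) (lam_ge h) U V hV fun Z hZ => ?_)
    have := hvo (syn ψ (e + 2) (unc n (e + 1) 1 Z)) (unc_mem hZ)
    rw [sub, h.mixed_unc hm0] at this
    exact this
  · rintro v ⟨hv, hvo⟩
    obtain ⟨V, hV, rfl⟩ := repc hv
    rw [sub, sq, sq, h.l2_unc hm0]
    have hg := core_gal hT hT' hC (lam_ge h) (lam_ge h) U V hV fun Z hZ => by
      have := hvo (syn ψ (e + 2) (unc n (e + 1) 1 Z)) (unc_mem hZ)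
      rw [sub, h.aForm_unc hm0] at this
      exact this
    exact ⟨sqrt_bound hch hg.1, sqrt_bound hch hg.2⟩

end SplineMG
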